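/- Let (A(n))_{n∈ℤ} be a sequence of i.i.d. random d×d matrices with entries in ℝ_max such that the positive part of max_{ij} A_{ij}(0) is integrable, A(0) almost surely has at least one finite entry on each row, and the graph 𝒢(A) is strongly connected. Then for every i ∈ {1,…,d}, lim_n (1/n)·y_i(n,0) = γ(A) almost surely. -/

import Mathlib

open Filter MeasureTheory ProbabilityTheory Topology

noncomputable section

/-- Max-plus action of a `d × d` matrix over `ℝ_max = ℝ ∪ {-∞}` (encoded as `EReal`,
with `⊤` never used) on a vector: `(A ⊗ v) i = max_j (A i j + v j)`. -/
def mpVec {d : ℕ} (A : Fin d → Fin d → EReal) (v : Fin d → EReal) : Fin d → EReal :=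
  fun i => ⨆ j, A i j + v j

/-- `appProd n f v = f 0 ⊗ f 1 ⊗ ⋯ ⊗ f (n-1) ⊗ v` in the max-plus algebra. -/
def appProd {d : ℕ} : ℕ → (ℕ → Fin d → Fin d → EReal) → (Fin d → EReal) → Fin d → EReal
  | 0, _, v => v
  | n + 1, f, v => mpVec (f 0) (appProd n (fun k => f (k + 1)) v)

/-- `xvec f n = f (n-1) ⊗ ⋯ ⊗ f 0 ⊗ 0`; with `f m = A(m)` this is `x(n, 0)`. -/
def xvec {d : ℕ} (f : ℕ → Fin d → Fin d → EReal) : ℕ → Fin d → EReal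
  | 0 => fun _ => 0
  | n + 1 => mpVec (f n) (xvec f n)

/-- `lvec n f = f 0 ⊗ f 1 ⊗ ⋯ ⊗ f (n-1) ⊗ 0`; with `f k = A(-(k+1))` this is `y(n, 0)`. -/
def lvec {d : ℕ} (n : ℕ) (f : ℕ → Fin d → Fin d → EReal) : Fin d → EReal :=
  appProd n f (fun _ => 0)

/-- Multiplication of an extended real by `1/n`. -/
def mpScale (n : ℕ) (x : EReal) : EReal := (((n : ℝ)⁻¹ : ℝ) : EReal) * x

open Classical in
/-- Restriction of a matrix to the indices in `c`: entries outside `c × c` are `-∞`. -/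
def mpRestrict {d : ℕ} (c : Set (Fin d)) (M : Fin d → Fin d → EReal) : Fin d → Fin d → EReal :=
  fun i j => if i ∈ c ∧ j ∈ c then M i j else ⊥

/-- Arc relation of the graph `𝒢(A)` of a random matrix `A`:
`(i,j)` is an arc iff `A ω i j ≠ -∞` with positive probability. -/
def arcRel {Ω : Type*} [MeasurableSpace Ω] (μ : Measure Ω) {d : ℕ}
    (A : Ω → Fin d → Fin d → EReal) (i j : Fin d) : Prop :=
  μ {ω | A ω i j ≠ ⊥} ≠ 0

/-- `c` is a strongly connected component of the graph with arc relation `r`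
(the mutual-reachability class of some node; nodes on no circuit are alone in their class). -/
def IsSCC {d : ℕ} (r : Fin d → Fin d → Prop) (c : Set (Fin d)) : Prop :=
  ∃ i, c = {j | Relation.ReflTransGen r i j ∧ Relation.ReflTransGen r j i}

/-- `i → c` : the node `i` reaches the component `c`. -/
def nodeReach {d : ℕ} (r : Fin d → Fin d → Prop) (i : Fin d) (c : Set (Fin d)) : Prop :=
  ∃ j ∈ c, Relation.ReflTransGen r i j

/-- `c → c'` : the component `c` reaches the component `c'`. -/
def sccReach {d : ℕ} (r : Fin d → Fin d → Prop) (c c' : Set (Fin d)) : Prop :=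
  ∃ i ∈ c, nodeReach r i c'

/-- `γ^{[c]} = max { γ^{(c')} : c → c' }`, where `γ` assigns to each s.c.c. its
maximal Lyapunov exponent. -/
def gammaBrack {d : ℕ} (r : Fin d → Fin d → Prop) (γ : Set (Fin d) → EReal)
    (c : Set (Fin d)) : EReal :=
  ⨆ c', ⨆ (_ : IsSCC r c' ∧ sccReach r c c'), γ c'

/-- The set of nodes `H_c = {c}` : nodes `i` with `c → i → c̃` for some s.c.c. `c̃`
realizing `γ^{(c̃)} = γ^{[c]}`. -/
def Hset {d : ℕ} (r : Fin d → Fin d → Prop) (γ : Set (Fin d) → EReal)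
    (c : Set (Fin d)) : Set (Fin d) :=
  {i | ∃ ct, IsSCC r ct ∧ (∃ j ∈ c, Relation.ReflTransGen r j i) ∧ nodeReach r i ct ∧
    γ ct = gammaBrack r γ c}

/-- `max { γ^{(c)} : c s.c.c. with i → c }`. -/
def limFormula {d : ℕ} (r : Fin d → Fin d → Prop) (γ : Set (Fin d) → EReal) (i : Fin d) : EReal :=
  ⨆ c, ⨆ (_ : IsSCC r c ∧ nodeReach r i c), γ c

/-!
`y_i(n, 0)` is the maximal weight of a path of length `n` issued from `i` in the graph of the
i.i.d. matrices `A(-1), …, A(-n)`. For each `n`, `max_i x_i(n, 0)` has the law of `max_i y_i(n, 0)`,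
since reversing the first `n` matrices does not change their law; hence, at every rate `c < γ`
(resp. `c > γ`), `max_i y_i(n, 0)` is almost surely above (resp. below) `c * n` infinitely often.

*Block argument.* Let `Z` be a family of sets of nodes, stable under taking successors, such that
from each of its sets one almost surely meets some length `m ≥ 1` at which all paths weigh less than
`c * m`. Cut every path into such blocks. The steps at which no block of length at most `L` is
available have small mean cost for large `L`, and this cost depends on finitely many matrices, so
by the law of large numbers the paths from `Z` weigh less than `c' * n` eventually, for each
`c' > c`.

*Upper bound.* Apply this to the family of all sets of nodes, for rates above `γ`.

*Lower bound.* Let `c < γ`. If growth at rate `c` from some node `i` had probability zero, then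
this would hold from all nodes, by strong connectedness, and the block argument for the family of
all sets from which growth at rate `c` is negligible would contradict the choice of `c`. So growth
at rate `c` has positive probability from each node. As rows have finite entries, a path always
reaches some node, from which the conditional probability of growth given the past is bounded
below; hence growth is almost sure, by approximation of its complement by cylinders.
-/

section Paths

variable {d : ℕ} {f g : ℕ → Fin d → Fin d → EReal} {S T : Finset (Fin d)} {c : ℝ}

/-- The successors of a set of nodes in the graph of the entries of `M` different from `-∞`. -/
def succSet (M : Fin d → Fin d → EReal) (S : Finset (Fin d)) : Finset (Fin d) :=
  open Classical in {j | ∃ i ∈ S, M i j ≠ ⊥}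

lemma mem_succSet {M : Fin d → Fin d → EReal} {j : Fin d} :
    j ∈ succSet M S ↔ ∃ i ∈ S, M i j ≠ ⊥ := by
  simp [succSet]

/-- The end points of the paths of length `n` issued from a set of nodes, the `k`-th step following
an arc of `f k`. -/
def reachSet : ℕ → (ℕ → Fin d → Fin d → EReal) → Finset (Fin d) → Finset (Fin d)
  | 0, _, S => S
  | n + 1, f, S => reachSet n (fun k => f (k + 1)) (succSet (f 0) S)

lemma reachSet_mem_of_stable {Z : Set (Finset (Fin d))} (hZ : ∀ k, ∀ S ∈ Z, succSet (f k) S ∈ Z)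
    (n : ℕ) (hS : S ∈ Z) : reachSet n f S ∈ Z := by
  induction n generalizing f S with
  | zero => exact hS
  | succ _ ih => exact ih (fun k => hZ (k + 1)) (hZ 0 S hS)

/-- The maximal weight of a path of length `n` issued from `S`, the `k`-th step being weighted by
`f k`. -/
def maxWeight (n : ℕ) (f : ℕ → Fin d → Fin d → EReal) (S : Finset (Fin d)) : EReal :=
  S.sup (lvec n f)

/-- The positive part of the largest entry of a matrix, as a real number (it is the junk value `0`
if some entry is `⊤`). -/
def posMax (M : Fin d → Fin d → EReal) : ℝ := ((⨆ i, ⨆ j, M i j) ⊔ 0).toReal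

lemma posMax_nonneg (M : Fin d → Fin d → EReal) : 0 ≤ posMax M :=
  EReal.toReal_nonneg le_sup_right

lemma le_posMax {M : Fin d → Fin d → EReal} (hM : ∀ i j, M i j ≠ ⊤) (i j : Fin d) :
    M i j ≤ (posMax M : EReal) := by
  have hsup : (⨆ i, ⨆ j, M i j) ≠ ⊤ := by
    simp only [← Finset.sup_univ_eq_iSup, ← lt_top_iff_ne_top, Finset.sup_lt_iff bot_lt_top]
    exact fun i _ j _ => (hM i j).lt_top
  calc M i j ≤ (⨆ i, ⨆ j, M i j) ⊔ 0 := le_sup_of_le_left (le_iSup₂ (f := M) i j)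
    _ = posMax M := (EReal.coe_toReal (by simp [max_eq_top, hsup])
        (EReal.bot_lt_zero.trans_le le_sup_right).ne').symm

lemma lvec_succ (n : ℕ) (f : ℕ → Fin d → Fin d → EReal) :
    lvec (n + 1) f = mpVec (f 0) (lvec n fun k => f (k + 1)) := rfl

lemma appProd_congr {n : ℕ} {v : Fin d → EReal} (h : ∀ k < n, f k = g k) :
    appProd n f v = appProd n g v := by
  induction n generalizing f g with
  | zero => rfl
  | succ n ih =>
    simp only [appProd]
    rw [h 0 n.succ_pos, ih fun k hk => h (k + 1) (by omega)]

lemma appProd_add (m n : ℕ) (f : ℕ → Fin d → Fin d → EReal) (v : Fin d → EReal) :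
    appProd (m + n) f v = appProd m f (appProd n (fun k => f (k + m)) v) := by
  induction m generalizing f with
  | zero => simp [appProd]
  | succ m ih =>
    rw [Nat.add_right_comm]
    simp only [appProd, ih]
    congr! 5

lemma xvec_eq_lvec (f : ℤ → Fin d → Fin d → EReal) (n : ℕ) :
    xvec (fun m => f m) n = lvec n fun k => f (n - 1 - k) := by
  induction n with
  | zero => rfl
  | succ n ih =>
    rw [lvec_succ, xvec, ih]
    congr 2
    · push_cast; ring_nf
    · funext k
      push_cast; ring_nf

lemma appProd_le_lvec_add {n : ℕ} {v : Fin d → EReal} {C : EReal}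
    (hv : ∀ j ∈ reachSet n f S, v j ≤ C) {i : Fin d} (hi : i ∈ S) :
    appProd n f v i ≤ lvec n f i + C := by
  induction n generalizing f S i with
  | zero => simpa [appProd, lvec] using hv i hi
  | succ n ih =>
    refine iSup_le fun j => ?_
    by_cases hj : f 0 i j = ⊥
    · simp [hj]
    · calc f 0 i j + appProd n (fun k => f (k + 1)) v j
          ≤ f 0 i j + (lvec n (fun k => f (k + 1)) j + C) := by
            gcongr; exact ih hv (mem_succSet.2 ⟨i, hi, hj⟩)
        _ = f 0 i j + lvec n (fun k => f (k + 1)) j + C := (add_assoc _ _ _).symm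
        _ ≤ lvec (n + 1) f i + C := by
            gcongr; exact le_iSup (fun j => f 0 i j + lvec n (fun k => f (k + 1)) j) j

lemma maxWeight_add_le (m n : ℕ) (f : ℕ → Fin d → Fin d → EReal) (S : Finset (Fin d)) :
    maxWeight (m + n) f S ≤
      maxWeight m f S + maxWeight n (fun k => f (k + m)) (reachSet m f S) := by
  refine Finset.sup_le fun i hi => ?_
  rw [lvec, appProd_add]
  calc appProd m f (lvec n fun k => f (k + m)) i
      ≤ lvec m f i + maxWeight n (fun k => f (k + m)) (reachSet m f S) :=
        appProd_le_lvec_add (fun j hj => Finset.le_sup (f := lvec n fun k => f (k + m)) hj) hi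
    _ ≤ _ := by gcongr; exact Finset.le_sup hi

lemma maxWeight_mono (n : ℕ) (f : ℕ → Fin d → Fin d → EReal) (h : S ⊆ T) :
    maxWeight n f S ≤ maxWeight n f T :=
  Finset.sup_mono h

lemma maxWeight_one_le (hf : ∀ i j, f 0 i j ≠ ⊤) : maxWeight 1 f S ≤ (posMax (f 0) : EReal) :=
  Finset.sup_le fun i _ => iSup_le fun j => by simpa [appProd] using le_posMax hf i j

lemma maxWeight_le_sum_posMax (hf : ∀ k i j, f k i j ≠ ⊤) (n : ℕ) :
    maxWeight n f S ≤ ((∑ k ∈ Finset.range n, posMax (f k) : ℝ) : EReal) := by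
  induction n generalizing f S with
  | zero => exact Finset.sup_le fun _ _ => by simp [lvec, appProd]
  | succ n ih =>
    calc maxWeight (n + 1) f S
        ≤ maxWeight 1 f S + maxWeight n (fun k => f (k + 1)) (reachSet 1 f S) :=
          n.add_comm 1 ▸ maxWeight_add_le 1 n f S
      _ ≤ posMax (f 0) + ((∑ k ∈ Finset.range n, posMax (f (k + 1)) : ℝ) : EReal) :=
          add_le_add (maxWeight_one_le (hf 0)) (ih fun k => hf (k + 1))
      _ = _ := by rw [Finset.sum_range_succ', add_comm, EReal.coe_add]

lemma exists_add_maxWeight_le (f : ℕ → Fin d → Fin d → EReal) (S : Finset (Fin d)) :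
    ∃ b : ℝ, ∀ n, b + maxWeight n (fun k => f (k + 1)) (succSet (f 0) S) ≤
      maxWeight (n + 1) f S := by
  obtain ⟨b, hb⟩ := (Set.finite_range fun p : Fin d × Fin d => (f 0 p.1 p.2).toReal).bddBelow
  refine ⟨b, fun n => ?_⟩
  rw [add_comm, ← EReal.le_sub_iff_add_le (.inl (EReal.coe_ne_bot b)) (.inl (EReal.coe_ne_top b))]
  refine Finset.sup_le fun j hj => ?_
  rw [EReal.le_sub_iff_add_le (.inl (EReal.coe_ne_bot b)) (.inl (EReal.coe_ne_top b)), add_comm]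
  obtain ⟨i, hi, hij⟩ := mem_succSet.1 hj
  calc b + lvec n (fun k => f (k + 1)) j
      ≤ f 0 i j + lvec n (fun k => f (k + 1)) j := by
        gcongr
        exact (EReal.coe_le_coe_iff.2 (hb ⟨(i, j), rfl⟩)).trans (EReal.coe_toReal_le hij)
    _ ≤ lvec (n + 1) f i := le_iSup (fun j => f 0 i j + lvec n (fun k => f (k + 1)) j) j
    _ ≤ maxWeight (n + 1) f S := Finset.le_sup hi

/-- The sequences of matrices along which the paths issued from `S` grow at rate at least `c`, up
to an additive constant. Small lengths are ignored, since `maxWeight 0 f S = 0` even for sequences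
along which all weights are `-∞`. -/
def growsFrom (c : ℝ) (S : Finset (Fin d)) : Set (ℕ → Fin d → Fin d → EReal) :=
  {f | ∃ K : ℕ, ∀ n ≥ K, ((c * n - K : ℝ) : EReal) ≤ maxWeight n f S}

lemma growsFrom_mono (c : ℝ) (h : S ⊆ T) : growsFrom c S ⊆ growsFrom c T :=
  fun f ⟨K, hK⟩ => ⟨K, fun n hn => (hK n hn).trans (maxWeight_mono n f h)⟩

lemma growsFrom_of_shift (h : (fun k => f (k + 1)) ∈ growsFrom c (succSet (f 0) S)) :
    f ∈ growsFrom c S := by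
  obtain ⟨K, hK⟩ := h
  obtain ⟨b, hb⟩ := exists_add_maxWeight_le f S
  obtain ⟨N, hN⟩ := exists_nat_ge (max (K + 1 : ℝ) (c + K - b))
  have hKN : K + 1 ≤ N := by exact_mod_cast (le_max_left _ _).trans hN
  have hbN : c + K - b ≤ N := (le_max_right _ _).trans hN
  refine ⟨N, fun n hn => ?_⟩
  obtain ⟨n, rfl⟩ := Nat.exists_eq_add_of_le' (show 1 ≤ n by omega)
  calc ((c * (n + 1 : ℕ) - N : ℝ) : EReal) ≤ ((b + (c * n - K) : ℝ) : EReal) := by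
        rw [EReal.coe_le_coe_iff]; push_cast; linarith
    _ ≤ b + maxWeight n (fun k => f (k + 1)) (succSet (f 0) S) := by
        rw [EReal.coe_add]; gcongr; exact hK n (by omega)
    _ ≤ maxWeight (n + 1) f S := hb n

lemma exists_maxWeight_lt_of_notMem_growsFrom (h : f ∉ growsFrom c S) :
    ∃ m ≥ 1, maxWeight m f S < ((c * m : ℝ) : EReal) := by
  simp only [growsFrom, Set.mem_ofPred_eq, not_exists, not_forall, not_le] at h
  obtain ⟨m, hm, hlt⟩ := h 1
  exact ⟨m, hm, hlt.trans (EReal.coe_lt_coe_iff.2 (by simp))⟩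

/-- The sequences which do not start with a block of length at most `L` of weight less than `c` per
step, for some starting set in the family `Z`, or whose first matrix is too large compared with
`L`. -/
def badSet (Z : Set (Finset (Fin d))) (c : ℝ) (L : ℕ) : Set (ℕ → Fin d → Fin d → EReal) :=
  {f | L < posMax (f 0) + |c| ∨
    ∃ S ∈ Z, ∀ m, 1 ≤ m → m ≤ L → ((c * m : ℝ) : EReal) ≤ maxWeight m f S}

/-- A bound for the contribution beyond `c` of the first step of a path: it vanishes off
`badSet Z c L`. -/
def excess (Z : Set (Finset (Fin d))) (c : ℝ) (L : ℕ) : (ℕ → Fin d → Fin d → EReal) → ℝ :=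
  (badSet Z c L).indicator fun f => posMax (f 0) + |c|

variable {Z : Set (Finset (Fin d))} {L : ℕ}

lemma excess_nonneg (f : ℕ → Fin d → Fin d → EReal) : 0 ≤ excess Z c L f :=
  Set.indicator_nonneg (fun f _ => add_nonneg (posMax_nonneg (f 0)) (abs_nonneg c)) f

lemma posMax_add_abs_le_add_excess (f : ℕ → Fin d → Fin d → EReal) :
    posMax (f 0) + |c| ≤ L + excess Z c L f := by
  by_cases hf : f ∈ badSet Z c L
  · simp [excess, hf]
  · simpa [excess, hf] using not_lt.1 fun h => hf (.inl h)

lemma exists_maxWeight_le_excess (htop : ∀ k i j, f k i j ≠ ⊤) (hS : S ∈ Z) (hL : 1 ≤ L) :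
    ∃ m, 1 ≤ m ∧ m ≤ L ∧ maxWeight m f S ≤
      ((c * m + ∑ k ∈ Finset.range m, excess Z c L fun l => f (l + k) : ℝ) : EReal) := by
  by_cases hf : f ∈ badSet Z c L
  · refine ⟨1, le_rfl, hL, (maxWeight_one_le (htop 0)).trans (EReal.coe_le_coe_iff.2 ?_)⟩
    have := neg_abs_le c
    simp only [Finset.range_one, Finset.sum_singleton, Nat.cast_one, add_zero, excess, hf,
      Set.indicator_of_mem]
    linarith
  · simp only [badSet, Set.mem_ofPred_eq, not_or, not_exists, not_and, not_forall, not_le] at hf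
    obtain ⟨m, h1, hm, hlt⟩ := hf.2 S hS
    refine ⟨m, h1, hm, hlt.le.trans (EReal.coe_le_coe_iff.2 ?_)⟩
    exact le_add_of_nonneg_right (Finset.sum_nonneg fun k _ => excess_nonneg _)

/- Cut the path greedily into blocks given by `exists_maxWeight_le_excess`; the last, incomplete
block has at most `L` steps, each of weight at most `L` up to the excess. -/
lemma maxWeight_le_sum_excess (hL : 1 ≤ L) (htop : ∀ k i j, f k i j ≠ ⊤)
    (hZ : ∀ k, ∀ S ∈ Z, succSet (f k) S ∈ Z) (n : ℕ) (hS : S ∈ Z) :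
    maxWeight n f S ≤
      ((c * n + L * L + ∑ k ∈ Finset.range n, excess Z c L fun l => f (l + k) : ℝ) : EReal) := by
  induction n using Nat.strong_induction_on generalizing f S with
  | _ n ih =>
  rcases le_or_gt n L with hn | hn
  · refine (maxWeight_le_sum_posMax htop n).trans (EReal.coe_le_coe_iff.2 ?_)
    calc ∑ k ∈ Finset.range n, posMax (f k)
        ≤ ∑ k ∈ Finset.range n, (L - |c| + excess Z c L fun l => f (l + k)) := by
          gcongr with k
          have := posMax_add_abs_le_add_excess (Z := Z) (c := c) (L := L) fun l => f (l + k)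
          rw [Nat.zero_add] at this
          linarith
      _ = n * L + n * -|c| + ∑ k ∈ Finset.range n, excess Z c L fun l => f (l + k) := by
          simp [Finset.sum_add_distrib]; ring
      _ ≤ L * L + n * c + ∑ k ∈ Finset.range n, excess Z c L fun l => f (l + k) := by
          gcongr; exact neg_abs_le c
      _ = _ := by ring
  · obtain ⟨m, h1, hm, hle⟩ := exists_maxWeight_le_excess (c := c) htop hS hL
    obtain ⟨r, rfl⟩ := Nat.exists_eq_add_of_le (hm.trans hn.le)
    have hrest := ih r (by omega) (f := fun k => f (k + m)) (fun k => htop _) (fun k => hZ _)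
      (reachSet_mem_of_stable hZ m hS)
    calc maxWeight (m + r) f S ≤ _ := maxWeight_add_le m r f S
      _ ≤ _ := add_le_add hle hrest
      _ = _ := by
        rw [← EReal.coe_add, Finset.sum_range_add]
        simp only [add_assoc, add_comm m]
        congr 1
        push_cast
        ring

end Paths

section Probability

open scoped ENNReal

lemma tendsto_integral_indicator_zero {α : Type*} [MeasurableSpace α] {μ : Measure α}
    {u : α → ℝ} (hu : Integrable u μ) {s : ℕ → Set α}
    (hs : ∀ n, MeasurableSet (s n)) (hlim : ∀ᵐ x ∂μ, ∀ᶠ n in atTop, x ∉ s n) :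
    Tendsto (fun n => ∫ x, (s n).indicator u x ∂μ) atTop (𝓝 0) := by
  rw [← integral_zero α ℝ (μ := μ)]
  refine tendsto_integral_of_dominated_convergence (fun x => ‖u x‖)
    (fun n => hu.aestronglyMeasurable.indicator (hs n)) hu.norm
    (fun n => .of_forall fun x => norm_indicator_le_norm_self u x) ?_
  filter_upwards [hlim] with x hx
  exact tendsto_const_nhds.congr' (hx.mono fun n hn => (Set.indicator_of_notMem hn u).symm)

/- Approximating `H` within `δ` by a set of `C` gives `μ H ≤ q * (μ H + δ) + δ`, where `q < 1`. -/
lemma measure_eq_zero_of_forall_inter_le {α : Type*} [mα : MeasurableSpace α] {μ : Measure α}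
    [IsFiniteMeasure μ] {C : Set (Set α)} (hC : IsSetRing C) (huniv : Set.univ ∈ C)
    (hgen : mα = MeasurableSpace.generateFrom C) {q : ℝ≥0∞} (hq : q < 1) {H : Set α}
    (hH : MeasurableSet H) (h : ∀ F ∈ C, μ (F ∩ H) ≤ q * μ F) : μ H = 0 := by
  by_contra hne
  refine (ENNReal.mul_lt_mul_left hne (measure_ne_top μ H) hq).not_ge ?_
  rw [one_mul]
  refine ENNReal.le_of_forall_pos_le_add fun ε hε _ => ?_
  obtain ⟨F, hF, hFH⟩ := exists_measure_symmDiff_lt_of_generateFrom_isSetRing (μ := μ) hC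
    ⟨{Set.univ}, Set.countable_singleton _, Set.singleton_subset_iff.2 huniv, by simp⟩ hgen hH
    (ENNReal.half_pos (ENNReal.coe_ne_zero.2 hε.ne'))
  have hH_le : μ H ≤ μ (F ∩ H) + μ (symmDiff F H) :=
    (measure_mono fun x hx => by by_cases hxF : x ∈ F <;> simp [Set.mem_symmDiff, hx, hxF]).trans
      (measure_union_le _ _)
  have hF_le : μ F ≤ μ H + μ (symmDiff F H) :=
    (measure_mono fun x hx => by by_cases hxH : x ∈ H <;> simp [Set.mem_symmDiff, hx, hxH]).trans
      (measure_union_le _ _)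
  calc μ H ≤ q * μ F + μ (symmDiff F H) := hH_le.trans (by gcongr; exact h F hF)
    _ ≤ q * (μ H + ε / 2) + ε / 2 := by gcongr; exact hF_le.trans (by gcongr)
    _ ≤ q * μ H + 1 * (ε / 2) + ε / 2 := by rw [mul_add]; gcongr
    _ = q * μ H + ε := by rw [one_mul, add_assoc, ENNReal.add_halves]

lemma ae_frequently_mem_of_measure_eq {α β : Type*} [MeasurableSpace α] [MeasurableSpace β]
    {μ : Measure α} {ν : Measure β} [IsProbabilityMeasure μ] [IsProbabilityMeasure ν]
    {s : ℕ → Set α} {t : ℕ → Set β} (hs : ∀ n, MeasurableSet (s n)) (ht : ∀ n, MeasurableSet (t n))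
    (hst : ∀ n, μ (s n) = ν (t n)) (h : ∀ᵐ x ∂μ, ∀ᶠ n in atTop, x ∈ s n) :
    ∀ᵐ y ∂ν, ∃ᶠ n in atTop, y ∈ t n := by
  have hlim : Tendsto (fun n => ν (t n)ᶜ) atTop (𝓝 0) := by
    have := tendsto_measure_of_ae_tendsto_indicator_of_isFiniteMeasure (μ := μ) atTop
      MeasurableSet.empty (fun n => (hs n).compl)
      (h.mono fun x hx => hx.mono fun n hn => by simp [hn])
    simpa [prob_compl_eq_one_sub, hs, ht, hst] using this
  have hzero (N : ℕ) : ν (⋂ n ≥ N, (t n)ᶜ) = 0 :=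
    nonpos_iff_eq_zero.1 <| ge_of_tendsto hlim <| (eventually_ge_atTop N).mono fun n hn =>
      measure_mono (Set.biInter_subset_of_mem hn)
  refine measure_mono_null (fun y hy => ?_) (measure_iUnion_null hzero)
  simpa [Filter.frequently_atTop] using hy

variable {ι : Type*} {X : ι → Type*} [∀ i, MeasurableSpace (X i)]
  {β γ : Type*} [MeasurableSpace β] [MeasurableSpace γ]

lemma measurable_iSup_comap_of_dependsOn {g : (∀ i, X i) → β} (hg : Measurable g) {s : Set ι}
    (hs : DependsOn g s) :
    Measurable[⨆ i ∈ s, MeasurableSpace.comap (fun x : ∀ i, X i => x i) inferInstance] g := by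
  classical
  rcases isEmpty_or_nonempty (∀ i, X i) with hX | ⟨⟨a⟩⟩
  · exact @measurable_of_empty _ _ (_) _ _ g
  have hfactor : g = g ∘ fun x => s.piecewise x a := by
    funext x
    exact hs fun i hi => (s.piecewise_eq_of_mem x a hi).symm
  rw [hfactor]
  refine hg.comp (@measurable_pi_lambda _ _ _ (_) _ _ fun i => ?_)
  by_cases hi : i ∈ s
  · simp only [Set.piecewise_eq_of_mem _ _ _ hi]
    exact (comap_measurable _).mono (le_iSup₂_of_le i hi le_rfl) le_rfl
  · simp only [Set.piecewise_eq_of_notMem _ _ _ hi]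
    exact measurable_const

lemma indepFun_infinitePi_of_dependsOn {P : ∀ i, Measure (X i)} [∀ i, IsProbabilityMeasure (P i)]
    {g : (∀ i, X i) → β} {h : (∀ i, X i) → γ} (hg : Measurable g) (hh : Measurable h)
    {s t : Set ι} (hgs : DependsOn g s) (hht : DependsOn h t) (hst : Disjoint s t) :
    IndepFun g h (Measure.infinitePi P) := by
  have hindep : iIndepFun (fun i (x : ∀ i, X i) => x i) (Measure.infinitePi P) :=
    iIndepFun_infinitePi (X := fun _ x => x) fun _ => measurable_id
  exact indep_of_indep_of_le_left (indep_of_indep_of_le_right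
    (indep_iSup_of_disjoint (fun i => (measurable_pi_apply i).comap_le) hindep.iIndep hst)
    (measurable_iSup_comap_of_dependsOn hh hht).comap_le)
    (measurable_iSup_comap_of_dependsOn hg hgs).comap_le

end Probability

section Averages

lemma sum_range_mul_eq_sum_residues {M : Type*} [AddCommMonoid M] (a : ℕ → M)
    (m q : ℕ) :
    ∑ k ∈ Finset.range (m * q), a k =
      ∑ r ∈ Finset.range m, ∑ j ∈ Finset.range q, a (m * j + r) := by
  rw [Finset.sum_comm]
  induction q with
  | zero => simp
  | succ q ih => rw [Nat.mul_succ, Finset.sum_range_add, ih, Finset.sum_range_succ]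

lemma eventually_sum_range_le_of_block_average {a : ℕ → ℝ} (ha : ∀ k, 0 ≤ a k) {l b : ℝ} {m : ℕ}
    (hm : m ≠ 0) (hlb : l < b)
    (h : ∀ r, Tendsto (fun q : ℕ => (∑ j ∈ Finset.range q, a (m * j + r)) / q) atTop (𝓝 l)) :
    ∀ᶠ n : ℕ in atTop, ∑ k ∈ Finset.range n, a k ≤ b * n := by
  have hl : 0 ≤ l := ge_of_tendsto' (h 0) fun q =>
    div_nonneg (Finset.sum_nonneg fun j _ => ha _) q.cast_nonneg
  obtain ⟨b', hlb', hb'⟩ := exists_between hlb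
  have hblock : ∀ᶠ q : ℕ in atTop, ∀ r ∈ Finset.range m,
      ∑ j ∈ Finset.range q, a (m * j + r) ≤ b' * q := by
    refine (Finset.eventually_all _).2 fun r _ => ?_
    filter_upwards [(h r).eventually_lt_const hlb', eventually_gt_atTop 0] with q hq hq0
    exact ((div_lt_iff₀ (Nat.cast_pos.2 hq0)).1 hq).le
  have hdiv : Tendsto (fun n => n / m + 1) atTop atTop :=
    (tendsto_add_atTop_nat 1).comp (Nat.tendsto_div_const_atTop hm)
  obtain ⟨N, hN⟩ := exists_nat_ge (b' * m / (b - b'))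
  rw [div_le_iff₀ (sub_pos.2 hb')] at hN
  filter_upwards [hdiv.eventually hblock, eventually_ge_atTop N] with n hn hNn
  have hlower : n ≤ m * (n / m + 1) := (Nat.lt_mul_div_succ n (Nat.pos_of_ne_zero hm)).le
  have hupper : m * (n / m + 1) ≤ n + m := by
    rw [Nat.mul_succ]; gcongr; exact Nat.mul_div_le n m
  calc ∑ k ∈ Finset.range n, a k ≤ ∑ k ∈ Finset.range (m * (n / m + 1)), a k :=
        Finset.sum_le_sum_of_subset_of_nonneg (Finset.range_mono hlower) fun k _ _ => ha k
    _ ≤ ∑ _r ∈ Finset.range m, b' * (n / m + 1 : ℕ) := by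
        rw [sum_range_mul_eq_sum_residues]; exact Finset.sum_le_sum hn
    _ = b' * (m * (n / m + 1) : ℕ) := by simp; ring
    _ ≤ b' * (n + m : ℕ) := by gcongr; exact hl.trans hlb'.le
    _ ≤ b' * n + (b - b') * n := by
        push_cast
        have : (N : ℝ) * (b - b') ≤ n * (b - b') := by gcongr
        linarith
    _ = b * n := by ring

end Averages

/-- The law of the sequences of independent variables of law `P`. -/
local notation "iid" P:max => Measure.infinitePi fun _ : ℕ => P

section Sequences

/-- The sequence `x, f 0, f 1, …`. -/
def seqCons {α : Type*} (x : α) (f : ℕ → α) : ℕ → α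
  | 0 => x
  | k + 1 => f k

lemma seqCons_zero_shift {α : Type*} (f : ℕ → α) : (seqCons (f 0) fun k => f (k + 1)) = f := by
  funext k
  cases k <;> rfl

variable {α : Type*} [MeasurableSpace α] (P : Measure α) [IsProbabilityMeasure P]

lemma measurePreserving_shift_infinitePi (n : ℕ) :
    MeasurePreserving (fun (f : ℕ → α) k => f (k + n)) (iid P) (iid P) :=
  ⟨by fun_prop, Measure.map_infinitePi_infinitePi_of_inj (P := fun _ : ℕ => P)
    (add_left_injective n)⟩

lemma measurable_seqCons : Measurable fun p : α × (ℕ → α) => seqCons p.1 p.2 := by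
  refine measurable_pi_iff.2 fun k => ?_
  cases k with
  | zero => exact measurable_fst
  | succ k => exact (measurable_pi_apply k).comp measurable_snd

lemma measurePreserving_seqCons :
    MeasurePreserving (fun p : α × (ℕ → α) => seqCons p.1 p.2) (P.prod (iid P)) (iid P) := by
  refine ⟨measurable_seqCons, ?_⟩
  have hindep : IndepFun (fun f : ℕ → α => f 0) (fun f k => f (k + 1)) (iid P) :=
    indepFun_infinitePi_of_dependsOn (by fun_prop) (by fun_prop) (s := {0}) (t := Set.Ioi 0)
      (fun f g h => h 0 rfl) (fun f g h => funext fun k => h (k + 1) k.succ_pos) (by simp)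
  have hprod := (indepFun_iff_map_prod_eq_prod_map_map
    (measurable_pi_apply 0).aemeasurable
    (measurePreserving_shift_infinitePi P 1).measurable.aemeasurable).1 hindep
  rw [(measurePreserving_eval_infinitePi (fun _ : ℕ => P) 0).map_eq,
    (measurePreserving_shift_infinitePi P 1).map_eq] at hprod
  rw [← hprod, Measure.map_map measurable_seqCons (by fun_prop)]
  exact (congrArg (iid P).map (funext seqCons_zero_shift)).trans Measure.map_id

lemma infinitePi_apply_eq_lintegral_seqCons {s : Set (ℕ → α)} (hs : MeasurableSet s) :
    (iid P) s = ∫⁻ x, (iid P) (seqCons x ⁻¹' s) ∂P := by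
  conv_lhs => rw [← (measurePreserving_seqCons P).measure_preimage hs.nullMeasurableSet,
    Measure.prod_apply (measurable_seqCons hs)]
  rfl

variable {P} in
lemma ae_forall_eval_infinitePi {p : α → Prop} (hp : ∀ᵐ x ∂P, p x) :
    ∀ᵐ f ∂(iid P), ∀ k, p (f k) :=
  ae_all_iff.2 fun k =>
    (measurePreserving_eval_infinitePi (fun _ : ℕ => P) k).quasiMeasurePreserving.ae hp

variable {P} {W : (ℕ → α) → ℝ} {m : ℕ}

lemma tendsto_block_average (hW : Measurable W) (hdep : DependsOn W (Set.Iio m))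
    (hint : Integrable W (iid P)) (r : ℕ) :
    ∀ᵐ f ∂(iid P),
      Tendsto (fun q : ℕ => (∑ j ∈ Finset.range q, W fun k => f (k + (m * j + r))) / q) atTop
        (𝓝 (∫ f, W f ∂(iid P))) := by
  have hshift (n : ℕ) : MeasurePreserving (fun (f : ℕ → α) k => f (k + n)) (iid P) (iid P) :=
    measurePreserving_shift_infinitePi P n
  have hlaw (n : ℕ) : (iid P).map (fun f => W fun k => f (k + n)) = (iid P).map W := by
    conv_rhs => rw [← (hshift n).map_eq, Measure.map_map hW (hshift n).measurable]
    rfl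
  have hmeas (n : ℕ) : Measurable fun f : ℕ → α => W fun k => f (k + n) :=
    hW.comp (hshift n).measurable
  have hblock (n : ℕ) : DependsOn (fun f : ℕ → α => W fun k => f (k + n)) (Set.Ico n (n + m)) :=
    fun f g h => hdep fun k (hk : k < m) => h (k + n) ⟨by omega, by omega⟩
  have hSLLN := strong_law_ae_real (μ := iid P) (fun j f => W fun k => f (k + (m * j + r)))
    ((hshift _).integrable_comp_of_integrable hint)
    (fun i j hij => indepFun_infinitePi_of_dependsOn (hmeas _) (hmeas _) (hblock _) (hblock _) ?_)
    (fun j => ⟨(hmeas _).aemeasurable, (hmeas _).aemeasurable, by rw [hlaw, hlaw]⟩)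
  · rwa [IdentDistrib.integral_eq ⟨(hmeas _).aemeasurable, hW.aemeasurable, hlaw _⟩] at hSLLN
  · refine Set.disjoint_left.2 fun k ⟨hki, hki'⟩ ⟨hkj, hkj'⟩ => ?_
    rcases lt_or_gt_of_ne hij with h | h <;>
    · have := Nat.mul_le_mul_left m (Nat.succ_le_of_lt h)
      rw [Nat.mul_succ] at this
      omega

lemma ae_eventually_sum_shift_le (hW : Measurable W) (hdep : DependsOn W (Set.Iio m))
    (hW0 : ∀ f, 0 ≤ W f) (hint : Integrable W (iid P)) {b : ℝ}
    (hb : ∫ f, W f ∂(iid P) < b) :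
    ∀ᵐ f ∂(iid P), ∀ᶠ n : ℕ in atTop,
      ∑ k ∈ Finset.range n, W (fun l => f (l + k)) ≤ b * n := by
  have hdep' : DependsOn W (Set.Iio (m + 1)) := hdep.mono (Set.Iio_subset_Iio m.le_succ)
  filter_upwards [ae_all_iff.2 (tendsto_block_average hW hdep' hint)] with f hf
  exact eventually_sum_range_le_of_block_average (fun k => hW0 _) m.succ_ne_zero hb hf

end Sequences

section Measurability

variable {d : ℕ} (Z : Set (Finset (Fin d))) (c : ℝ) (L : ℕ)

lemma measurable_lvec (n : ℕ) (i : Fin d) :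
    Measurable fun f : ℕ → Fin d → Fin d → EReal => lvec n f i := by
  induction n generalizing i with
  | zero => exact measurable_const
  | succ n ih =>
    simp only [lvec_succ, mpVec]
    refine Measurable.iSup fun j => Measurable.add (by fun_prop) ?_
    exact (ih j).comp (by fun_prop : Measurable fun (f : ℕ → Fin d → Fin d → EReal) k => f (k + 1))

lemma measurable_maxWeight (n : ℕ) (S : Finset (Fin d)) :
    Measurable fun f : ℕ → Fin d → Fin d → EReal => maxWeight n f S := by
  simp only [maxWeight, Finset.sup_eq_iSup]
  exact Measurable.iSup fun i => Measurable.iSup fun _ => measurable_lvec n i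

lemma dependsOn_maxWeight (n : ℕ) (S : Finset (Fin d)) :
    DependsOn (fun f : ℕ → Fin d → Fin d → EReal => maxWeight n f S) (Set.Iio n) :=
  fun _ _ h => Finset.sup_congr rfl fun i _ => congrFun (appProd_congr h) i

lemma measurable_posMax : Measurable (posMax (d := d)) :=
  ((Measurable.iSup fun i => Measurable.iSup fun j => by fun_prop).sup
    measurable_const).ereal_toReal

lemma measurableSet_growsFrom (S : Finset (Fin d)) : MeasurableSet (growsFrom c S) := by
  simp only [growsFrom, Set.ofPred_exists, Set.ofPred_forall]
  exact .iUnion fun K => .iInter fun n => .iInter fun _ =>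
    measurableSet_le measurable_const (measurable_maxWeight n S)

lemma measurableSet_badSet : MeasurableSet (badSet Z c L) := by
  have hunion : badSet Z c L = {f | L < posMax (f 0) + |c|} ∪
      ⋃ S ∈ Z, ⋂ m, ⋂ (_ : 1 ≤ m), ⋂ (_ : m ≤ L),
        {f | ((c * m : ℝ) : EReal) ≤ maxWeight m f S} := by
    ext f
    simp [badSet]
  rw [hunion]
  have hfirst : MeasurableSet {f : ℕ → Fin d → Fin d → EReal | L < posMax (f 0) + |c|} :=
    measurableSet_lt measurable_const
      ((measurable_posMax.comp (measurable_pi_apply 0)).add_const |c|)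
  exact hfirst.union (.biUnion Z.to_countable fun S _ => .iInter fun m => .iInter fun _ =>
    .iInter fun _ => measurableSet_le measurable_const (measurable_maxWeight m S))

lemma measurable_excess : Measurable (excess Z c L) :=
  ((measurable_posMax.comp (measurable_pi_apply 0)).add_const |c|).indicator
    (measurableSet_badSet Z c L)

lemma dependsOn_excess : DependsOn (excess Z c L) (Set.Iio (L + 1)) := by
  intro f g h
  have hweight (S : Finset (Fin d)) (m : ℕ) (hm : m ≤ L) : maxWeight m f S = maxWeight m g S :=
    dependsOn_maxWeight m S fun k (hk : k < m) => h k (by simp; omega)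
  have hbad : f ∈ badSet Z c L ↔ g ∈ badSet Z c L := by
    simp +contextual only [badSet, Set.mem_ofPred_eq, h 0 L.succ_pos, hweight]
  by_cases hf : f ∈ badSet Z c L
  · simp only [excess, Set.indicator_of_mem hf, Set.indicator_of_mem (hbad.1 hf), h 0 L.succ_pos]
  · simp only [excess, Set.indicator_of_notMem hf, Set.indicator_of_notMem (mt hbad.2 hf)]

variable {P : Measure (Fin d → Fin d → EReal)} [IsProbabilityMeasure P]

lemma integrable_posMax_eval_add_const (hint : Integrable posMax P) :
    Integrable (fun f => posMax (f 0) + c) (iid P) :=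
  ((measurePreserving_eval_infinitePi (fun _ : ℕ => P) 0).integrable_comp_of_integrable hint).add
    (integrable_const c)

variable {Z c}

lemma tendsto_integral_excess_zero (hint : Integrable posMax P)
    (hslow : ∀ᵐ f ∂(iid P), ∀ S ∈ Z, ∃ m ≥ 1, maxWeight m f S < ((c * m : ℝ) : EReal)) :
    Tendsto (fun L => ∫ f, excess Z c L f ∂(iid P)) atTop (𝓝 0) := by
  refine tendsto_integral_indicator_zero (integrable_posMax_eval_add_const |c| hint)
    (measurableSet_badSet Z c) ?_
  filter_upwards [hslow] with f hf
  have hblock : ∀ᶠ L : ℕ in atTop, ∀ S ∈ Z, ∃ m, 1 ≤ m ∧ m ≤ L ∧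
      maxWeight m f S < ((c * m : ℝ) : EReal) := by
    refine Z.toFinite.eventually_all.2 fun S hS => ?_
    obtain ⟨m, hm, hlt⟩ := hf S hS
    filter_upwards [eventually_ge_atTop m] with L hL using ⟨m, hm, hL, hlt⟩
  filter_upwards [hblock, tendsto_natCast_atTop_atTop.eventually_ge_atTop (posMax (f 0) + |c|)]
    with L hL hpos
  simpa only [badSet, Set.mem_ofPred_eq, not_or, not_exists, not_and, not_forall, not_le, not_lt,
    exists_prop] using ⟨hpos, hL⟩

end Measurability

section Growth

variable {d : ℕ} {P : Measure (Fin d → Fin d → EReal)} [IsProbabilityMeasure P] {c c' : ℝ}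
  {S : Finset (Fin d)}

lemma ae_eventually_maxWeight_lt (htop : ∀ᵐ M ∂P, ∀ i j, M i j ≠ ⊤) (hint : Integrable posMax P)
    (hcc' : c < c') {Z : Set (Finset (Fin d))} (hZ : ∀ᵐ M ∂P, ∀ S ∈ Z, succSet M S ∈ Z)
    (hslow : ∀ᵐ f ∂(iid P), ∀ S ∈ Z, ∃ m ≥ 1, maxWeight m f S < ((c * m : ℝ) : EReal)) :
    ∀ᵐ f ∂(iid P), ∀ᶠ n : ℕ in atTop, ∀ S ∈ Z, maxWeight n f S < ((c' * n : ℝ) : EReal) := by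
  have hδ : 0 < (c' - c) / 2 := half_pos (sub_pos.2 hcc')
  obtain ⟨L, hL, hL1⟩ := (((tendsto_integral_excess_zero hint hslow).eventually_lt_const hδ).and
    (eventually_ge_atTop 1)).exists
  have hsum := ae_eventually_sum_shift_le (measurable_excess Z c L) (dependsOn_excess Z c L)
    excess_nonneg
    ((integrable_posMax_eval_add_const |c| hint).indicator (measurableSet_badSet Z c L)) hL
  filter_upwards [hsum, ae_forall_eval_infinitePi htop, ae_forall_eval_infinitePi hZ]
    with f hf hftop hfZ
  have hLL : ∀ᶠ n : ℕ in atTop, (L * L : ℝ) < (c' - c) / 2 * n :=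
    (tendsto_natCast_atTop_atTop.const_mul_atTop hδ).eventually_gt_atTop _
  filter_upwards [hf, hLL] with n hn hnL S hS
  refine (maxWeight_le_sum_excess (c := c) hL1 hftop hfZ n hS).trans_lt (EReal.coe_lt_coe_iff.2 ?_)
  linarith

lemma eventually_lt_maxWeight_of_mem_growsFrom (hcc' : c < c')
    {f : ℕ → Fin d → Fin d → EReal} (hf : f ∈ growsFrom c' S) :
    ∀ᶠ n : ℕ in atTop, ((c * n : ℝ) : EReal) < maxWeight n f S := by
  obtain ⟨K, hK⟩ := hf
  filter_upwards [eventually_ge_atTop K,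
    (tendsto_natCast_atTop_atTop.const_mul_atTop (sub_pos.2 hcc')).eventually_gt_atTop (K : ℝ)]
    with n hn hKn
  exact (EReal.coe_lt_coe_iff.2 (by linarith)).trans_le (hK n hn)

lemma ae_measure_growsFrom_succSet_eq_zero
    (h : (iid P) (growsFrom c S) = 0) :
    ∀ᵐ M ∂P, (iid P) (growsFrom c (succSet M S)) = 0 := by
  have hcons := (measurePreserving_seqCons P).quasiMeasurePreserving.ae
    (measure_eq_zero_iff_ae_notMem.1 h)
  filter_upwards [Measure.ae_ae_of_ae_prod hcons] with M hM
  exact measure_eq_zero_iff_ae_notMem.2 (hM.mono fun f hf hfM => hf (growsFrom_of_shift hfM))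

lemma measure_growsFrom_singleton_eq_zero_of_reach {i j : Fin d}
    (hij : Relation.ReflTransGen (arcRel P id) i j)
    (h : (iid P) (growsFrom c {i}) = 0) : (iid P) (growsFrom c {j}) = 0 := by
  induction hij with
  | refl => exact h
  | tail _ hab ih =>
    by_contra hne
    refine hab (measure_eq_zero_iff_ae_notMem.2 ?_)
    filter_upwards [ae_measure_growsFrom_succSet_eq_zero ih] with M hM hMab
    exact hne (measure_mono_null (growsFrom_mono c (by simpa [mem_succSet] using hMab)) hM)

/- The sets from which growth at rate `c` is negligible form a family stable under successors. -/
lemma ae_eventually_maxWeight_univ_lt_of_measure_growsFrom_eq_zero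
    (htop : ∀ᵐ M ∂P, ∀ i j, M i j ≠ ⊤) (hint : Integrable posMax P)
    (hsc : ∀ i j, Relation.ReflTransGen (arcRel P id) i j) (hcc' : c < c') {i : Fin d}
    (h : (iid P) (growsFrom c {i}) = 0) :
    ∀ᵐ f ∂(iid P), ∀ᶠ n : ℕ in atTop, maxWeight n f Finset.univ < ((c' * n : ℝ) : EReal) := by
  let Z : Set (Finset (Fin d)) := {S | (iid P) (growsFrom c S) = 0}
  have hZ : ∀ᵐ M ∂P, ∀ S ∈ Z, succSet M S ∈ Z :=
    (ae_ball_iff Z.to_countable).2 fun S hS => ae_measure_growsFrom_succSet_eq_zero hS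
  have hslow : ∀ᵐ f ∂(iid P), ∀ S ∈ Z, ∃ m ≥ 1, maxWeight m f S < ((c * m : ℝ) : EReal) :=
    (ae_ball_iff Z.to_countable).2 fun S hS => (measure_eq_zero_iff_ae_notMem.1 hS).mono
      fun f hf => exists_maxWeight_lt_of_notMem_growsFrom hf
  filter_upwards [ae_eventually_maxWeight_lt htop hint hcc' hZ hslow] with f hf
  filter_upwards [hf] with n hn
  refine (Finset.sup_lt_iff (EReal.bot_lt_coe _)).2 fun j _ => ?_
  simpa [maxWeight] using hn {j} (measure_growsFrom_singleton_eq_zero_of_reach (hsc i j) h)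

/- Conditionally on the first `K` matrices, the paths issued from `S` grow as soon as those issued
from their end points after `K` steps do. -/
lemma measure_inter_compl_growsFrom_le (hrow : ∀ᵐ M ∂P, ∀ i, ∃ j, M i j ≠ ⊥) {q : ENNReal}
    (hq : ∀ S : Finset (Fin d), S.Nonempty → (iid P) (growsFrom c S)ᶜ ≤ q)
    {F : Set (ℕ → Fin d → Fin d → EReal)} (hF : MeasurableSet F) {K : ℕ}
    (hFK : DependsOn (· ∈ F) (Set.Iio K)) (hS : S.Nonempty) :
    (iid P) (F ∩ (growsFrom c S)ᶜ) ≤ q * (iid P) F := by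
  induction K generalizing F S with
  | zero =>
    rcases F.eq_empty_or_nonempty with rfl | ⟨f, hf⟩
    · simp
    · have hFuniv : F = Set.univ := Set.eq_univ_of_forall fun g => by
        simpa using (hFK (x := f) (y := g) (by simp)).mp hf
      simpa [hFuniv] using hq S hS
  | succ K ih =>
    have hfiber : Measurable fun M => (iid P) (seqCons M ⁻¹' F) :=
      measurable_measure_prodMk_left (measurable_seqCons hF)
    rw [infinitePi_apply_eq_lintegral_seqCons P (hF.inter (measurableSet_growsFrom c S).compl),
      infinitePi_apply_eq_lintegral_seqCons P hF, ← lintegral_const_mul q hfiber]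
    refine lintegral_mono_ae ?_
    filter_upwards [hrow] with M hM
    have hcons : Measurable (seqCons M) := measurable_seqCons.comp measurable_prodMk_left
    have hsub : seqCons M ⁻¹' (F ∩ (growsFrom c S)ᶜ) ⊆
        seqCons M ⁻¹' F ∩ (growsFrom c (succSet M S))ᶜ :=
      fun f hf => ⟨hf.1, fun h => hf.2 (growsFrom_of_shift h)⟩
    refine (measure_mono hsub).trans (ih (hcons hF) (fun f g h => hFK fun k hk => ?_) ?_)
    · cases k with
      | zero => rfl
      | succ k => exact h k (Nat.lt_of_succ_lt_succ hk)
    · obtain ⟨i, hi⟩ := hS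
      obtain ⟨j, hj⟩ := hM i
      exact ⟨j, mem_succSet.2 ⟨i, hi, hj⟩⟩

lemma ae_mem_growsFrom (hrow : ∀ᵐ M ∂P, ∀ i, ∃ j, M i j ≠ ⊥)
    (hpos : ∀ i, (iid P) (growsFrom c {i}) ≠ 0) (hS : S.Nonempty) :
    ∀ᵐ f ∂(iid P), f ∈ growsFrom c S := by
  set q : ENNReal := Finset.univ.sup fun i => (iid P) (growsFrom c {i})ᶜ
  have hq : q < 1 := (Finset.sup_lt_iff (by simp)).2 fun i _ => by
    rw [prob_compl_eq_one_sub (measurableSet_growsFrom c {i})]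
    exact ENNReal.sub_lt_self ENNReal.one_ne_top one_ne_zero (hpos i)
  have hcompl (T : Finset (Fin d)) (hT : T.Nonempty) : (iid P) (growsFrom c T)ᶜ ≤ q := by
    obtain ⟨i, hi⟩ := hT
    exact (measure_mono (Set.compl_subset_compl.2
      (growsFrom_mono c (Finset.singleton_subset_iff.2 hi)))).trans
      (Finset.le_sup (f := fun i => (iid P) (growsFrom c {i})ᶜ) (Finset.mem_univ i))
  refine measure_eq_zero_of_forall_inter_le isSetRing_measurableCylinders
    (univ_mem_measurableCylinders _) generateFrom_measurableCylinders.symm hq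
    (measurableSet_growsFrom c S).compl fun F hF => ?_
  obtain ⟨s, B, -, rfl⟩ := (mem_measurableCylinders F).1 hF
  refine measure_inter_compl_growsFrom_le hrow hcompl (.of_mem_measurableCylinders hF)
    (K := s.sup id + 1) (fun f g h => ?_) hS
  have : s.restrict f = s.restrict g :=
    funext fun k => h k (Nat.lt_succ_of_le (Finset.le_sup (f := id) k.2))
  simp only [mem_cylinder, this]

end Growth

section Scale

lemma mpScale_lt_iff {n : ℕ} (hn : 0 < n) (x : EReal) (c : ℝ) :
    mpScale n x < c ↔ x < ((c * n : ℝ) : EReal) := by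
  have hn' : (0 : ℝ) < n := by exact_mod_cast hn
  rw [mpScale]
  induction x with
  | bot =>
    rw [EReal.coe_mul_bot_of_pos (inv_pos.2 hn')]
    exact iff_of_true (EReal.bot_lt_coe _) (EReal.bot_lt_coe _)
  | top => simp [EReal.coe_mul_top_of_pos (inv_pos.2 hn')]
  | coe x => rw [← EReal.coe_mul, EReal.coe_lt_coe_iff, EReal.coe_lt_coe_iff,
      inv_mul_lt_iff₀ hn', mul_comm]

lemma lt_mpScale_iff {n : ℕ} (hn : 0 < n) (x : EReal) (c : ℝ) :
    (c : EReal) < mpScale n x ↔ ((c * n : ℝ) : EReal) < x := by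
  have hn' : (0 : ℝ) < n := by exact_mod_cast hn
  rw [mpScale]
  induction x with
  | bot => simp [EReal.coe_mul_bot_of_pos (inv_pos.2 hn')]
  | top =>
    rw [EReal.coe_mul_top_of_pos (inv_pos.2 hn')]
    exact iff_of_true (EReal.coe_lt_top _) (EReal.coe_lt_top _)
  | coe x => rw [← EReal.coe_mul, EReal.coe_lt_coe_iff, EReal.coe_lt_coe_iff,
      lt_inv_mul_iff₀ hn', mul_comm]

lemma tendsto_mpScale_iff {x : ℕ → EReal} {γ : EReal} :
    Tendsto (fun n => mpScale n (x n)) atTop (𝓝 γ) ↔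
      (∀ q : ℚ, ((q : ℝ) : EReal) < γ → ∀ᶠ n : ℕ in atTop, ((q * n : ℝ) : EReal) < x n) ∧
      ∀ q : ℚ, γ < ((q : ℝ) : EReal) → ∀ᶠ n : ℕ in atTop, x n < ((q * n : ℝ) : EReal) := by
  rw [tendsto_order]
  refine ⟨fun h => ⟨fun q hq => ?_, fun q hq => ?_⟩, fun h => ⟨fun a ha => ?_, fun a ha => ?_⟩⟩
  · filter_upwards [h.1 _ hq, eventually_gt_atTop 0] with n hn hn0
    exact (lt_mpScale_iff hn0 _ _).1 hn
  · filter_upwards [h.2 _ hq, eventually_gt_atTop 0] with n hn hn0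
    exact (mpScale_lt_iff hn0 _ _).1 hn
  · obtain ⟨q, haq, hq⟩ := EReal.lt_iff_exists_rat_btwn.1 ha
    filter_upwards [h.1 q hq, eventually_gt_atTop 0] with n hn hn0
    exact haq.trans ((lt_mpScale_iff hn0 _ _).2 hn)
  · obtain ⟨q, hq, hqa⟩ := EReal.lt_iff_exists_rat_btwn.1 ha
    filter_upwards [h.2 q hq, eventually_gt_atTop 0] with n hn hn0
    exact ((mpScale_lt_iff hn0 _ _).2 hn).trans hqa

lemma ae_tendsto_mpScale_iff {α : Type*} [MeasurableSpace α] {μ : Measure α} {X : ℕ → α → EReal}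
    {γ : EReal} :
    (∀ᵐ ω ∂μ, Tendsto (fun n => mpScale n (X n ω)) atTop (𝓝 γ)) ↔
      (∀ q : ℚ, ((q : ℝ) : EReal) < γ →
        ∀ᵐ ω ∂μ, ∀ᶠ n : ℕ in atTop, ((q * n : ℝ) : EReal) < X n ω) ∧
      ∀ q : ℚ, γ < ((q : ℝ) : EReal) →
        ∀ᵐ ω ∂μ, ∀ᶠ n : ℕ in atTop, X n ω < ((q * n : ℝ) : EReal) := by
  simp only [tendsto_mpScale_iff, eventually_and, ae_all_iff]

end Scale

section Limit

variable {d : ℕ} {P : Measure (Fin d → Fin d → EReal)} [IsProbabilityMeasure P] {c c' : ℝ}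

lemma ae_eventually_maxWeight_univ_lt_of_frequently (htop : ∀ᵐ M ∂P, ∀ i j, M i j ≠ ⊤)
    (hint : Integrable posMax P) (hcc' : c < c')
    (h : ∀ᵐ f ∂(iid P), ∃ᶠ n : ℕ in atTop,
      maxWeight n f Finset.univ < ((c * n : ℝ) : EReal)) :
    ∀ᵐ f ∂(iid P), ∀ᶠ n : ℕ in atTop, maxWeight n f Finset.univ < ((c' * n : ℝ) : EReal) := by
  have hslow : ∀ᵐ f ∂(iid P), ∀ S ∈ (Set.univ : Set (Finset (Fin d))), ∃ m ≥ 1,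
      maxWeight m f S < ((c * m : ℝ) : EReal) := by
    filter_upwards [h] with f hf S _
    obtain ⟨m, hlt, hm⟩ := (hf.and_eventually (eventually_ge_atTop 1)).exists
    exact ⟨m, hm, (maxWeight_mono m f S.subset_univ).trans_lt hlt⟩
  filter_upwards [ae_eventually_maxWeight_lt htop hint hcc'
    (.of_forall fun M S _ => Set.mem_univ _) hslow] with f hf
  filter_upwards [hf] with n hn using hn _ (Set.mem_univ _)

lemma measure_growsFrom_singleton_ne_zero_of_frequently (htop : ∀ᵐ M ∂P, ∀ i j, M i j ≠ ⊤)
    (hint : Integrable posMax P) (hsc : ∀ i j, Relation.ReflTransGen (arcRel P id) i j)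
    (hcc' : c < c')
    (h : ∀ᵐ f ∂(iid P), ∃ᶠ n : ℕ in atTop,
      ((c' * n : ℝ) : EReal) < maxWeight n f Finset.univ) (i : Fin d) :
    (iid P) (growsFrom c {i}) ≠ 0 := by
  intro h0
  obtain ⟨f, hlow, hupp⟩ := (h.and
    (ae_eventually_maxWeight_univ_lt_of_measure_growsFrom_eq_zero htop hint hsc hcc' h0)).exists
  obtain ⟨n, hn, hn'⟩ := (hlow.and_eventually hupp).exists
  exact hn.not_gt hn'

lemma ae_tendsto_mpScale_lvec (htop : ∀ᵐ M ∂P, ∀ i j, M i j ≠ ⊤)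
    (hrow : ∀ᵐ M ∂P, ∀ i, ∃ j, M i j ≠ ⊥) (hint : Integrable posMax P)
    (hsc : ∀ i j, Relation.ReflTransGen (arcRel P id) i j) {γ : EReal}
    (hlow : ∀ q : ℚ, ((q : ℝ) : EReal) < γ → ∀ᵐ f ∂(iid P),
      ∃ᶠ n : ℕ in atTop, ((q * n : ℝ) : EReal) < maxWeight n f Finset.univ)
    (hupp : ∀ q : ℚ, γ < ((q : ℝ) : EReal) → ∀ᵐ f ∂(iid P),
      ∃ᶠ n : ℕ in atTop, maxWeight n f Finset.univ < ((q * n : ℝ) : EReal)) (i : Fin d) :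
    ∀ᵐ f ∂(iid P), Tendsto (fun n => mpScale n (lvec n f i)) atTop (𝓝 γ) := by
  refine ae_tendsto_mpScale_iff.2 ⟨fun q hq => ?_, fun q hq => ?_⟩
  · obtain ⟨r, hqr, hr⟩ := EReal.lt_iff_exists_rat_btwn.1 hq
    obtain ⟨c, hqc, hcr⟩ := exists_between (EReal.coe_lt_coe_iff.1 hqr)
    have hpos := measure_growsFrom_singleton_ne_zero_of_frequently htop hint hsc hcr (hlow r hr)
    filter_upwards [ae_mem_growsFrom hrow hpos (Finset.singleton_nonempty i)] with f hf
    simpa [maxWeight] using eventually_lt_maxWeight_of_mem_growsFrom hqc hf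
  · obtain ⟨r, hr, hrq⟩ := EReal.lt_iff_exists_rat_btwn.1 hq
    filter_upwards [ae_eventually_maxWeight_univ_lt_of_frequently htop hint
      (EReal.coe_lt_coe_iff.1 hrq) (hupp r hr)] with f hf
    filter_upwards [hf] with n hn
    exact (Finset.le_sup (f := lvec n f) (Finset.mem_univ i)).trans_lt hn

end Limit

section Transfer

lemma map_subsequence_eq_infinitePi {Ω α ι : Type*} [MeasurableSpace Ω] [MeasurableSpace α]
    {μ : Measure Ω} {X : ι → Ω → α} (hmeas : ∀ n, Measurable (X n)) (hindep : iIndepFun X μ)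
    {P : Measure α} (hlaw : ∀ n, μ.map (X n) = P) {σ : ℕ → ι} (hσ : σ.Injective) :
    μ.map (fun ω k => X (σ k) ω) = iid P := by
  have := (hindep.precomp hσ).map_fun_eq_infinitePi_map fun k => hmeas (σ k)
  simpa only [hlaw] using this

variable {d : ℕ} {Ω : Type*} [MeasurableSpace Ω] {μ : Measure Ω}
  {A : ℤ → Ω → Fin d → Fin d → EReal} {P : Measure (Fin d → Fin d → EReal)}

lemma iSup_xvec_eq_maxWeight (f : ℤ → Fin d → Fin d → EReal) (n : ℕ) :
    ⨆ i, xvec (fun m => f m) n i = maxWeight n (fun k => f (n - 1 - k)) Finset.univ := by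
  rw [xvec_eq_lvec, maxWeight, Finset.sup_univ_eq_iSup]

lemma measurable_iSup_xvec (hmeas : ∀ n, Measurable (A n)) (n : ℕ) :
    Measurable fun ω => ⨆ i, xvec (fun m => A (m : ℤ) ω) n i := by
  simp only [fun ω => iSup_xvec_eq_maxWeight (fun m => A m ω) n]
  exact (measurable_maxWeight n Finset.univ).comp (measurable_pi_lambda _ fun k => hmeas _)

lemma measure_iSup_xvec_mem (hmeas : ∀ n, Measurable (A n)) (hindep : iIndepFun A μ)
    (hlaw : ∀ n, μ.map (A n) = P) (n : ℕ) {s : Set EReal} (hs : MeasurableSet s) :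
    μ {ω | (⨆ i, xvec (fun m => A (m : ℤ) ω) n i) ∈ s} =
      (iid P) {f | maxWeight n f Finset.univ ∈ s} := by
  have hσ : Function.Injective fun k : ℕ => (n : ℤ) - 1 - k := fun a b h => by simpa using h
  rw [← map_subsequence_eq_infinitePi hmeas hindep hlaw hσ,
    Measure.map_apply (measurable_pi_lambda _ fun k => hmeas _)
      (show MeasurableSet {f | maxWeight n f Finset.univ ∈ s} from measurable_maxWeight n _ hs)]
  simp only [fun ω => iSup_xvec_eq_maxWeight (fun m => A m ω) n, Set.preimage_ofPred_eq]

lemma ae_frequently_maxWeight_mem [IsProbabilityMeasure μ] [IsProbabilityMeasure P]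
    (hmeas : ∀ n, Measurable (A n)) (hindep : iIndepFun A μ) (hlaw : ∀ n, μ.map (A n) = P)
    {s : ℕ → Set EReal} (hs : ∀ n, MeasurableSet (s n))
    (h : ∀ᵐ ω ∂μ, ∀ᶠ n in atTop, (⨆ i, xvec (fun m => A (m : ℤ) ω) n i) ∈ s n) :
    ∀ᵐ f ∂(iid P), ∃ᶠ n in atTop, maxWeight n f Finset.univ ∈ s n :=
  ae_frequently_mem_of_measure_eq (fun n => measurable_iSup_xvec hmeas n (hs n))
    (fun n => measurable_maxWeight n Finset.univ (hs n))
    (fun n => measure_iSup_xvec_mem hmeas hindep hlaw n (hs n)) h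

lemma arcRel_map {X : Ω → Fin d → Fin d → EReal} (hX : Measurable X) :
    arcRel (μ.map X) id = arcRel μ X := by
  have harc (i j : Fin d) : MeasurableSet {M : Fin d → Fin d → EReal | M i j ≠ ⊥} := by
    measurability
  funext i j
  simp only [arcRel, id, Measure.map_apply hX (harc i j), Set.preimage_ofPred_eq]

end Transfer

/-- **Theorem (Hong; strongly connected i.i.d. case).**
If `(A(n))_{n∈ℤ}` are i.i.d. random `d × d` matrices over `ℝ_max` with the positive part of
`max_{ij} A_{ij}(0)` integrable, `A(0)` a.s. has at least one finite entry on each row, and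
`𝒢(A)` is strongly connected, then `(1/n) y_i(n,0) → γ(A)` a.s. for every `i`. -/
theorem hong_strongly_connected
    {d : ℕ} {Ω : Type*} [MeasurableSpace Ω] (μ : Measure Ω) [IsProbabilityMeasure μ]
    (A : ℤ → Ω → Fin d → Fin d → EReal)
    (hmeas : ∀ n, Measurable (A n))
    (hindep : iIndepFun A μ)
    (hident : ∀ n, μ.map (A n) = μ.map (A 0))
    (hnotop : ∀ n ω i j, A n ω i j ≠ ⊤)
    (hrow : ∀ n, ∀ᵐ ω ∂μ, ∀ i, ∃ j, A n ω i j ≠ ⊥)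
    (hint : Integrable (fun ω => ((⨆ i, ⨆ j, A 0 ω i j) ⊔ 0).toReal) μ)
    (hsc : ∀ i j : Fin d, Relation.ReflTransGen (arcRel μ (A 0)) i j)
    (γA : EReal)
    (hγA : ∀ᵐ ω ∂μ, Tendsto
      (fun n => mpScale n (⨆ i, xvec (fun m => A (m : ℤ) ω) n i)) atTop (𝓝 γA)) :
    ∀ i, ∀ᵐ ω ∂μ,
      Tendsto (fun n => mpScale n (lvec n (fun k => A (-(k + 1) : ℤ) ω) i)) atTop (𝓝 γA) := by
  intro i
  have : IsProbabilityMeasure (μ.map (A 0)) :=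
    Measure.isProbabilityMeasure_map (hmeas 0).aemeasurable
  have htop : ∀ᵐ M ∂(μ.map (A 0)), ∀ i j, M i j ≠ ⊤ :=
    (ae_map_iff (hmeas 0).aemeasurable (by measurability)).2 (.of_forall (hnotop 0))
  have hrow' : ∀ᵐ M ∂(μ.map (A 0)), ∀ i, ∃ j, M i j ≠ ⊥ :=
    (ae_map_iff (hmeas 0).aemeasurable (by measurability)).2 (hrow 0)
  have hint' : Integrable posMax (μ.map (A 0)) :=
    (integrable_map_measure measurable_posMax.aestronglyMeasurable (hmeas 0).aemeasurable).2 hint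
  have hlim := ae_tendsto_mpScale_iff.1 hγA
  have hback : Function.Injective fun k : ℕ => (-(k + 1) : ℤ) := fun a b h => by simpa using h
  have hy := ae_tendsto_mpScale_lvec htop hrow' hint' (by rwa [arcRel_map (hmeas 0)])
    (fun q hq => ae_frequently_maxWeight_mem hmeas hindep hident
      (fun n => measurableSet_Ioi) (hlim.1 q hq))
    (fun q hq => ae_frequently_maxWeight_mem hmeas hindep hident
      (fun n => measurableSet_Iio) (hlim.2 q hq)) i
  rw [← map_subsequence_eq_infinitePi hmeas hindep hident hback] at hy
  exact ae_of_ae_map (measurable_pi_lambda _ fun k => hmeas _).aemeasurable hy
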